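/- Let a > 0 and let φ₁ : ℝ → ℝ be a 1-kink. Then φ₁ is strictly increasing on ℝ (φ₁'(r) > 0 for all r), and moreover φ₁(0) = π/2 and φ₁'(0) > √2. -/

import Mathlib

open Real Filter

structure IsK (a : ℝ) (f p : ℝ → ℝ) : Prop where
  d1 : ∀ r, HasDerivAt f (p r) r
  d2 : ∀ r, HasDerivAt p (Real.sin (2 * f r) - 2 * r / (r ^ 2 + a ^ 2) * p r) r
  bot : Tendsto f atBot (nhds 0)
  top : Tendsto f atTop (nhds Real.pi)

lemma IsK.refl {a : ℝ} {f p : ℝ → ℝ} (h : IsK a f p) :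
    IsK a (fun r => Real.pi - f (-r)) (fun r => p (-r)) where
  d1 r := by
    have := ((h.d1 (-r)).comp r (hasDerivAt_neg r)).const_sub Real.pi
    refine HasDerivAt.congr_deriv this ?_
    ring
  d2 r := by
    have := ((h.d2 (-r)).comp r (hasDerivAt_neg r))
    refine HasDerivAt.congr_deriv this ?_
    have : Real.sin (2 * (Real.pi - f (-r))) = - Real.sin (2 * f (-r)) := by
      rw [show 2 * (Real.pi - f (-r)) = 2 * Real.pi - 2 * f (-r) by ring, Real.sin_two_pi_sub]
    rw [this]
    ring
  bot := by
    have := (h.top.comp tendsto_neg_atBot_atTop).const_sub Real.pi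
    simpa using this
  top := by
    have := (h.bot.comp tendsto_neg_atTop_atBot).const_sub Real.pi
    simpa using this

lemma IsK.dsin {a : ℝ} {f p : ℝ → ℝ} (h : IsK a f p) (r : ℝ) :
    HasDerivAt (fun r => Real.sin (f r) ^ 2) (Real.sin (2 * f r) * p r) r := by
  have := ((h.d1 r).sin).pow 2
  refine HasDerivAt.congr_deriv this ?_
  rw [Real.sin_two_mul]; simp; ring

lemma IsK.dE {a : ℝ} {f p : ℝ → ℝ} (h : IsK a f p) (r : ℝ) :
    HasDerivAt (fun r => p r ^ 2 / 2 - Real.sin (f r) ^ 2)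
      (-(2 * r / (r ^ 2 + a ^ 2)) * p r ^ 2) r := by
  have := (((h.d2 r).pow 2).div_const 2).sub (h.dsin r)
  refine HasDerivAt.congr_deriv this ?_
  simp; ring

lemma IsK.dF {a : ℝ} (ha : 0 < a) {f p : ℝ → ℝ} (h : IsK a f p) (r : ℝ) :
    HasDerivAt (fun r => (r ^ 2 + a ^ 2) ^ 2 * (p r ^ 2 / 2 - Real.sin (f r) ^ 2))
      (-(4 * r * (r ^ 2 + a ^ 2)) * Real.sin (f r) ^ 2) r := by
  have h1 : HasDerivAt (fun r : ℝ => (r ^ 2 + a ^ 2) ^ 2) (4 * r * (r ^ 2 + a ^ 2)) r := by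
    have := ((((hasDerivAt_id r).pow 2).add_const (a ^ 2)).pow 2)
    refine HasDerivAt.congr_deriv this ?_
    simp; ring
  have := h1.mul (h.dE r)
  refine HasDerivAt.congr_deriv this ?_
  have : r ^ 2 + a ^ 2 ≠ 0 := by positivity
  field_simp
  ring

/-- backward uniqueness at the constant solution -/
lemma IsK.not_rest {a : ℝ} (ha : 0 < a) {f p : ℝ → ℝ} (h : IsK a f p) (r0 : ℝ)
    (h1 : f r0 = Real.pi) (h2 : p r0 = 0) : False := by
  set C : ℝ := 3 + 2 / a with hC
  have hd : ∀ r, HasDerivAt (fun r => ((f r - Real.pi) ^ 2 + p r ^ 2) * Real.exp (C * r))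
      ((2 * (f r - Real.pi) * p r
        + 2 * p r * (Real.sin (2 * f r) - 2 * r / (r ^ 2 + a ^ 2) * p r)
        + C * ((f r - Real.pi) ^ 2 + p r ^ 2)) * Real.exp (C * r)) r := by
    intro r
    have e : HasDerivAt (fun r => Real.exp (C * r)) (Real.exp (C * r) * C) r := by
      have := ((hasDerivAt_id r).const_mul C).exp
      simpa using this
    have := ((((h.d1 r).sub_const Real.pi).pow 2).add ((h.d2 r).pow 2)).mul e
    refine HasDerivAt.congr_deriv this ?_
    simp; ring
  have hm : Monotone (fun r => ((f r - Real.pi) ^ 2 + p r ^ 2) * Real.exp (C * r)) := by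
    apply monotone_of_hasDerivAt_nonneg hd
    intro r
    apply mul_nonneg _ (Real.exp_pos _).le
    have hk : 2 * r / (r ^ 2 + a ^ 2) ≤ 1 / a := by
      rw [div_le_div_iff₀ (by positivity) ha]
      nlinarith [sq_nonneg (r - a)]
    have hs : |Real.sin (2 * f r)| ≤ 2 * |f r - Real.pi| := by
      have : Real.sin (2 * f r) = Real.sin (2 * (f r - Real.pi)) := by
        rw [show 2 * (f r - Real.pi) = 2 * f r - 2 * Real.pi by ring, Real.sin_sub_two_pi]
      rw [this]
      have := Real.abs_sin_le_abs (x := 2 * (f r - Real.pi))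
      rwa [abs_mul, abs_two] at this
    have hs2 : -(2 * (|f r - Real.pi| * |p r|)) ≤ p r * Real.sin (2 * f r) := by
      have := neg_abs_le (p r * Real.sin (2 * f r))
      rw [abs_mul] at this
      nlinarith [abs_nonneg (p r)]
    have hs3 : 2 * (|f r - Real.pi| * |p r|) ≤ (f r - Real.pi) ^ 2 + p r ^ 2 := by
      rw [← sq_abs (f r - Real.pi), ← sq_abs (p r)]
      nlinarith [sq_nonneg (|f r - Real.pi| - |p r|)]
    have hk2 : 2 * r / (r ^ 2 + a ^ 2) * p r ^ 2 ≤ 1 / a * p r ^ 2 :=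
      mul_le_mul_of_nonneg_right hk (sq_nonneg _)
    have h5 : 0 ≤ 1 / a * (f r - Real.pi) ^ 2 := by positivity
    have hC' : C = 3 + 2 * (1 / a) := by rw [hC]; ring
    show 0 ≤ _
    rw [hC']
    nlinarith [sq_nonneg (f r - Real.pi + p r)]
  have hz : ∀ r ≤ r0, f r = Real.pi := by
    intro r hr
    have := hm hr
    simp only [h1, h2] at this
    have e := Real.exp_pos (C * r)
    have : (f r - Real.pi) ^ 2 + p r ^ 2 ≤ 0 := by
      by_contra hh
      push Not at hh
      have := mul_pos hh e
      norm_num at *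
      linarith
    have : (f r - Real.pi) ^ 2 = 0 := by nlinarith [sq_nonneg (f r - Real.pi), sq_nonneg (p r)]
    have := pow_eq_zero_iff (two_ne_zero) |>.1 this
    linarith
  have : Tendsto f atBot (nhds Real.pi) := by
    apply tendsto_const_nhds.congr'
    filter_upwards [eventually_le_atBot r0] with r hr using (hz r hr).symm
  have := tendsto_nhds_unique this h.bot
  exact Real.pi_pos.ne' this

lemma IsK.E_pos' {a : ℝ} (ha : 0 < a) {f p : ℝ → ℝ} (h : IsK a f p) (r0 : ℝ) (hr0 : 0 ≤ r0) :
    0 < p r0 ^ 2 / 2 - Real.sin (f r0) ^ 2 := by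
  have hanti : AntitoneOn (fun r => p r ^ 2 / 2 - Real.sin (f r) ^ 2) (Set.Ici 0) := by
    apply antitoneOn_of_deriv_nonpos (convex_Ici 0)
    · exact fun r _ => (h.dE r).continuousAt.continuousWithinAt
    · exact fun r _ => (h.dE r).differentiableAt.differentiableWithinAt
    · intro r hr
      rw [interior_Ici] at hr
      have hr : 0 < r := hr
      rw [(h.dE r).deriv]
      have : 0 ≤ (2 * r / (r ^ 2 + a ^ 2)) * p r ^ 2 := by positivity
      linarith
  have hs : Tendsto (fun r => - Real.sin (f r) ^ 2) atTop (nhds 0) := by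
    have : Tendsto (fun r => - Real.sin (f r) ^ 2) atTop (nhds (- Real.sin Real.pi ^ 2)) :=
      (((Real.continuous_sin.tendsto _).comp h.top).pow 2).neg
    simpa using this
  have hnn : ∀ r ≥ 0, 0 ≤ p r ^ 2 / 2 - Real.sin (f r) ^ 2 := by
    intro r hr
    apply le_of_tendsto hs
    filter_upwards [eventually_ge_atTop r] with s hsr
    have := hanti (Set.mem_Ici.2 hr) (Set.mem_Ici.2 (hr.le.trans hsr)) hsr
    simp only at this
    nlinarith [sq_nonneg (p s)]
  by_contra hcon
  push Not at hcon
  have hz : ∀ r ≥ r0, p r ^ 2 / 2 - Real.sin (f r) ^ 2 = 0 := by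
    intro r hr
    have := hanti (Set.mem_Ici.2 hr0) (Set.mem_Ici.2 (hr0.trans hr)) hr
    simp only at this
    linarith [hnn r (hr0.trans hr)]
  have hp : ∀ r > r0, p r = 0 := by
    intro r hr
    have : HasDerivAt (fun r => p r ^ 2 / 2 - Real.sin (f r) ^ 2) 0 r := by
      apply (hasDerivAt_const r (0:ℝ)).congr_of_eventuallyEq
      filter_upwards [lt_mem_nhds hr] with s hs using hz s (le_of_lt hs)
    have e := this.unique (h.dE r)
    have hr' : 0 < r := lt_of_le_of_lt hr0 hr
    have : 0 < 2 * r / (r ^ 2 + a ^ 2) := by positivity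
    have : p r ^ 2 = 0 := by nlinarith
    exact pow_eq_zero_iff (two_ne_zero) |>.1 this
  have hf : ∀ r > r0, f r = f (r0 + 1) := by
    intro r hr
    apply (convex_Ioi r0).is_const_of_fderivWithin_eq_zero (𝕜 := ℝ) (f := f)
      (fun x _ => (h.d1 x).differentiableAt.differentiableWithinAt)
    · intro x hx
      have hx' : r0 < x := hx
      rw [fderivWithin_of_isOpen isOpen_Ioi hx]
      have := (h.d1 x)
      rw [hp x hx'] at this
      ext
      simp [this.deriv]
    · exact hr
    · simp
  have : Tendsto f atTop (nhds (f (r0 + 1))) := by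
    apply tendsto_const_nhds.congr'
    filter_upwards [eventually_gt_atTop r0] with r hr using (hf r hr).symm
  exact h.not_rest ha (r0 + 1) (tendsto_nhds_unique this h.top) (hp _ (by linarith))

lemma IsK.E_pos {a : ℝ} (ha : 0 < a) {f p : ℝ → ℝ} (h : IsK a f p) (r : ℝ) :
    0 < p r ^ 2 / 2 - Real.sin (f r) ^ 2 := by
  rcases le_total 0 r with hr | hr
  · exact h.E_pos' ha r hr
  · have := h.refl.E_pos' ha (-r) (by linarith)
    simpa using this

lemma IsK.p_pos {a : ℝ} (ha : 0 < a) {f p : ℝ → ℝ} (h : IsK a f p) (r : ℝ) : 0 < p r := by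
  have hne : ∀ r, p r ≠ 0 := by
    intro r h0
    have := h.E_pos ha r
    rw [h0] at this
    nlinarith [sq_nonneg (Real.sin (f r))]
  have hc : Continuous p := continuous_iff_continuousAt.2 fun r => (h.d2 r).continuousAt
  by_contra hcon
  have hr : p r < 0 := lt_of_le_of_ne (not_lt.1 hcon) (hne r)
  have hall : ∀ s, p s < 0 := by
    intro s
    by_contra hs
    have hs : 0 ≤ p s := not_lt.1 hs
    obtain ⟨x, hx⟩ := mem_range_of_exists_le_of_exists_ge hc ⟨r, hr.le⟩ ⟨s, hs⟩
    exact hne x hx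
  have hanti : Antitone f := antitone_of_hasDerivAt_nonpos h.d1 (fun x => (hall x).le)
  have h1 : f 0 ≤ 0 := hanti.ge_of_tendsto h.bot 0
  have h2 : Real.pi ≤ f 0 := hanti.le_of_tendsto h.top 0
  linarith [Real.pi_pos]

lemma IsK.mono {a : ℝ} (ha : 0 < a) {f p : ℝ → ℝ} (h : IsK a f p) : StrictMono f :=
  strictMono_of_hasDerivAt_pos h.d1 (h.p_pos ha)

lemma IsK.lt_pi {a : ℝ} (ha : 0 < a) {f p : ℝ → ℝ} (h : IsK a f p) (r : ℝ) : f r < Real.pi :=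
  lt_of_lt_of_le (h.mono ha (lt_add_one r)) ((h.mono ha).monotone.ge_of_tendsto h.top _)

lemma IsK.pos {a : ℝ} (ha : 0 < a) {f p : ℝ → ℝ} (h : IsK a f p) (r : ℝ) : 0 < f r :=
  lt_of_le_of_lt ((h.mono ha).monotone.le_of_tendsto h.bot _) (h.mono ha (sub_one_lt r))

lemma IsK.F_lim {a : ℝ} (ha : 0 < a) {f p : ℝ → ℝ} (h : IsK a f p) :
    Tendsto (fun r => (r ^ 2 + a ^ 2) ^ 2 * (p r ^ 2 / 2 - Real.sin (f r) ^ 2)) atTop (nhds 0) := by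
  obtain ⟨R0, hR0⟩ := eventually_atTop.1
    (h.top.eventually (lt_mem_nhds (show Real.pi / 2 < Real.pi by linarith [Real.pi_pos])))
  set R := max R0 0 with hR
  have hR' : ∀ r ≥ R, Real.pi / 2 < f r := fun r hr => hR0 r ((le_max_left _ _).trans hr)
  have hRn : 0 ≤ R := le_max_right _ _
  have hpi := Real.pi_pos
  have hpu : ∀ r ≥ R, (Real.pi - f r) / 2 ≤ p r := by
    intro r hr
    have h1 := h.lt_pi ha r
    have h2 := hR' r hr
    have hs := Real.mul_le_sin (x := Real.pi - f r) (by linarith) (by linarith)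
    rw [Real.sin_pi_sub] at hs
    have h4 : (Real.pi - f r) / 2 ≤ 2 / Real.pi * (Real.pi - f r) := by
      have : 1 / 2 ≤ 2 / Real.pi := by
        rw [div_le_div_iff₀ (by norm_num) hpi]; linarith [Real.pi_le_four]
      nlinarith
    have hE := h.E_pos ha r
    have hp := h.p_pos ha r
    apply h4.trans (hs.trans _)
    apply le_of_sq_le_sq _ hp.le
    nlinarith [sq_nonneg (Real.sin (f r))]
  have hdecay : AntitoneOn (fun r => (Real.pi - f r) * Real.exp (r / 2)) (Set.Ici R) := by
    have hd : ∀ r, HasDerivAt (fun r => (Real.pi - f r) * Real.exp (r / 2))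
        ((-p r + (Real.pi - f r) / 2) * Real.exp (r / 2)) r := by
      intro r
      have := ((h.d1 r).const_sub Real.pi).mul ((hasDerivAt_id r).div_const 2).exp
      refine HasDerivAt.congr_deriv this ?_
      simp; ring
    apply antitoneOn_of_deriv_nonpos (convex_Ici R)
    · exact fun r _ => (hd r).continuousAt.continuousWithinAt
    · exact fun r _ => (hd r).differentiableAt.differentiableWithinAt
    · intro r hr
      rw [interior_Ici] at hr
      rw [(hd r).deriv]
      have := hpu r (le_of_lt hr)
      exact mul_nonpos_of_nonpos_of_nonneg (by linarith) (Real.exp_pos _).le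
  have hpanti : AntitoneOn p (Set.Ici R) := by
    apply antitoneOn_of_deriv_nonpos (convex_Ici R)
    · exact fun r _ => (h.d2 r).continuousAt.continuousWithinAt
    · exact fun r _ => (h.d2 r).differentiableAt.differentiableWithinAt
    · intro r hr
      rw [interior_Ici] at hr
      have hr : R < r := hr
      rw [(h.d2 r).deriv]
      have h1 := h.lt_pi ha r
      have h2 := hR' r hr.le
      have hp := h.p_pos ha r
      have hr0 : 0 < r := by linarith
      have : 0 ≤ 2 * r / (r ^ 2 + a ^ 2) * p r := by positivity
      have hs : Real.sin (2 * f r) ≤ 0 := by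
        have := Real.sin_nonpos_of_nonpos_of_neg_pi_le (x := 2 * f r - 2 * Real.pi)
          (by linarith) (by linarith)
        rwa [Real.sin_sub_two_pi] at this
      linarith
  set C := (Real.pi - f R) * Real.exp (R / 2) with hC
  have hpb : ∀ r ≥ R + 1, p r ≤ C * Real.exp (1 / 2) * Real.exp (-(r / 2)) := by
    intro r hr
    obtain ⟨c, hc, hc'⟩ := exists_hasDerivAt_eq_slope f p (show r - 1 < r by linarith)
      (fun x _ => (h.d1 x).continuousAt.continuousWithinAt) (fun x _ => h.d1 x)
    have h1 : p r ≤ p c := hpanti (Set.mem_Ici.2 (by linarith [hc.1])) (Set.mem_Ici.2 (by linarith))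
      hc.2.le
    have h2 : p r ≤ Real.pi - f (r - 1) := by
      rw [hc'] at h1
      have : r - (r - 1) = 1 := by ring
      rw [this, div_one] at h1
      linarith [h.lt_pi ha r]
    have h3 := hdecay (Set.mem_Ici.2 le_rfl) (Set.mem_Ici.2 (show R ≤ r - 1 by linarith))
      (show R ≤ r - 1 by linarith)
    simp only at h3
    have h4 : Real.pi - f (r - 1) = (Real.pi - f (r - 1)) * Real.exp ((r - 1) / 2) *
        (Real.exp (1 / 2) * Real.exp (-(r / 2))) := by
      rw [mul_assoc, ← Real.exp_add, ← Real.exp_add]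
      rw [show (r - 1) / 2 + (1 / 2 + -(r / 2)) = 0 by ring]
      simp
    rw [mul_assoc]
    apply h2.trans
    rw [h4]
    exact mul_le_mul_of_nonneg_right h3 (by positivity)
  have hlim : Tendsto (fun r : ℝ => (r ^ 2 + a ^ 2) * Real.exp (-(r / 2))) atTop (nhds 0) := by
    have hh : Tendsto (fun r : ℝ => r / 2) atTop atTop := tendsto_id.atTop_div_const (by norm_num)
    have h2 := ((Real.tendsto_pow_mul_exp_neg_atTop_nhds_zero 2).comp hh).const_mul 4
    have h0 := ((Real.tendsto_pow_mul_exp_neg_atTop_nhds_zero 0).comp hh).const_mul (a ^ 2)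
    have := h2.add h0
    simp only [mul_zero, add_zero] at this
    apply this.congr
    intro r
    simp only [Function.comp]
    ring
  have hlim2 : Tendsto (fun r : ℝ => ((C * Real.exp (1 / 2)) *
      ((r ^ 2 + a ^ 2) * Real.exp (-(r / 2)))) ^ 2 / 2) atTop (nhds 0) := by
    have := ((hlim.const_mul (C * Real.exp (1 / 2))).pow 2).div_const 2
    simpa using this
  apply squeeze_zero' _ _ hlim2
  · filter_upwards with r
    have := h.E_pos ha r
    positivity
  · filter_upwards [eventually_ge_atTop (R + 1)] with r hr
    have h1 := hpb r hr
    have hp := h.p_pos ha r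
    have hw : 0 < r ^ 2 + a ^ 2 := by positivity
    have h2 : (r ^ 2 + a ^ 2) * p r ≤
        (C * Real.exp (1 / 2)) * ((r ^ 2 + a ^ 2) * Real.exp (-(r / 2))) := by
      have := mul_le_mul_of_nonneg_left h1 hw.le
      linarith
    have h3 := pow_le_pow_left₀ (by positivity) h2 2
    have h4 : 0 ≤ (r ^ 2 + a ^ 2) ^ 2 * Real.sin (f r) ^ 2 := by positivity
    nlinarith

lemma IsK.half_le {a : ℝ} (ha : 0 < a) {f p : ℝ → ℝ} (h : IsK a f p) : f 0 ≤ Real.pi / 2 := by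
  by_contra hcon
  push Not at hcon
  obtain ⟨g, hg⟩ : ∃ g : ℝ → ℝ, g = fun r => Real.pi - f (-r) := ⟨_, rfl⟩
  obtain ⟨q, hq⟩ : ∃ q : ℝ → ℝ, q = fun r => p (-r) := ⟨_, rfl⟩
  have k : IsK a g q := by rw [hg, hq]; exact h.refl
  have hg0 : g 0 = Real.pi - f 0 := by rw [hg]; simp
  have hq0 : q 0 = p 0 := by rw [hq]; simp
  have hsin : ∀ r > 0, g r < f r → Real.sin (f r) ^ 2 < Real.sin (g r) ^ 2 := by
    intro r hr hlt
    have h1 := h.mono ha hr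
    have h2 := k.mono ha hr
    have h3 := h.lt_pi ha r
    have h4 := k.lt_pi ha r
    have h5 := k.pos ha r
    have h6 := h.pos ha r
    have hs : 0 < Real.sin (f r) := Real.sin_pos_of_pos_of_lt_pi h6 h3
    have : Real.sin (f r) < Real.sin (g r) := by
      have e := Real.sin_sub_sin (g r) (f r)
      have e1 : Real.sin ((g r - f r) / 2) < 0 :=
        Real.sin_neg_of_neg_of_neg_pi_lt (by linarith) (by linarith)
      have e2 : Real.cos ((g r + f r) / 2) < 0 :=
        Real.cos_neg_of_pi_div_two_lt_of_lt (by linarith) (by linarith)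
      nlinarith [mul_pos_of_neg_of_neg e1 e2]
    exact pow_lt_pow_left₀ this hs.le two_ne_zero
  obtain ⟨G, hG⟩ : ∃ G : ℝ → ℝ, G = fun r =>
    (r ^ 2 + a ^ 2) ^ 2 * (q r ^ 2 / 2 - Real.sin (g r) ^ 2) -
    (r ^ 2 + a ^ 2) ^ 2 * (p r ^ 2 / 2 - Real.sin (f r) ^ 2) := ⟨_, rfl⟩
  have hdG : ∀ r, HasDerivAt G (-(4 * r * (r ^ 2 + a ^ 2)) * Real.sin (g r) ^ 2 -
      -(4 * r * (r ^ 2 + a ^ 2)) * Real.sin (f r) ^ 2) r := by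
    intro r; rw [hG]; exact (k.dF ha r).sub (h.dF ha r)
  have hG0 : G 0 = 0 := by
    rw [hG]; simp [hg0, hq0, Real.sin_pi_sub]
  have hGneg : ∀ r > 0, g r < f r → deriv G r < 0 := by
    intro r hr hlt
    rw [(hdG r).deriv]
    have := hsin r hr hlt
    have hw : 0 < 4 * r * (r ^ 2 + a ^ 2) := by positivity
    nlinarith
  have hGc : Continuous G := continuous_iff_continuousAt.2 fun r => (hdG r).continuousAt
  have hD : ∀ r, HasDerivAt (fun r => f r - g r) (p r - q r) r := fun r => (h.d1 r).sub (k.d1 r)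
  have hDc : Continuous (fun r => f r - g r) :=
    continuous_iff_continuousAt.2 fun r => (hD r).continuousAt
  have hpos : ∀ r ≥ 0, g r < f r := by
    by_contra hc
    push Not at hc
    obtain ⟨r1, hr1, hr1'⟩ := hc
    set S := {r : ℝ | 0 ≤ r ∧ f r - g r ≤ 0} with hS
    have hSc : IsClosed S :=
      (isClosed_le continuous_const continuous_id).inter (isClosed_le hDc continuous_const)
    have hSb : BddBelow S := ⟨0, fun x hx => hx.1⟩
    have hSn : S.Nonempty := ⟨r1, hr1, by linarith⟩
    have hsS : sInf S ∈ S := hSc.csInf_mem hSn hSb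
    set s := sInf S with hs
    have hs0 : 0 < s := by
      rcases hsS.1.lt_or_eq with h' | h'
      · exact h'
      · have := hsS.2
        rw [← h', hg0] at this
        linarith
    have hbefore : ∀ r, 0 ≤ r → r < s → g r < f r := by
      intro r hr hrs
      by_contra hc
      have : s ≤ r := csInf_le hSb ⟨hr, by linarith⟩
      linarith
    have hDs : f s - g s = 0 := by
      apply le_antisymm hsS.2
      have : Tendsto (fun r => f r - g r) (nhdsWithin s (Set.Iio s)) (nhds (f s - g s)) :=
        hDc.continuousAt.tendsto.mono_left nhdsWithin_le_nhds
      apply ge_of_tendsto this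
      filter_upwards [Ioo_mem_nhdsLT hs0] with r hr
      linarith [hbefore r hr.1.le hr.2]
    have hGs : G s < 0 := by
      have : StrictAntiOn G (Set.Icc 0 s) := by
        apply strictAntiOn_of_deriv_neg (convex_Icc 0 s) hGc.continuousOn
        intro r hr
        rw [interior_Icc] at hr
        exact hGneg r hr.1 (hbefore r hr.1.le hr.2)
      have := this (Set.left_mem_Icc.2 hs0.le) (Set.right_mem_Icc.2 hs0.le) hs0
      linarith
    have hpq : q s < p s := by
      have e : f s = g s := by linarith
      rw [hG] at hGs
      simp only [e] at hGs
      have hw : 0 < (s ^ 2 + a ^ 2) ^ 2 := by positivity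
      have : q s ^ 2 < p s ^ 2 := by
        by_contra hc
        push Not at hc
        have := mul_le_mul_of_nonneg_left hc hw.le
        linarith
      exact lt_of_pow_lt_pow_left₀ 2 (h.p_pos ha s).le this
    have hle : p s - q s ≤ 0 := by
      have := (hasDerivAt_iff_tendsto_slope_left_right.1 (hD s)).1
      apply le_of_tendsto this
      filter_upwards [Ioo_mem_nhdsLT hs0] with r hr
      rw [slope_def_field, hDs]
      have := hbefore r hr.1.le hr.2
      apply div_nonpos_of_nonneg_of_nonpos
      · linarith
      · linarith [hr.2]
    linarith
  have hanti : StrictAntiOn G (Set.Ici 0) := by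
    apply strictAntiOn_of_deriv_neg (convex_Ici 0) hGc.continuousOn
    intro r hr
    rw [interior_Ici] at hr
    exact hGneg r hr (hpos r (le_of_lt hr))
  have hlim : Tendsto G atTop (nhds 0) := by
    have := (k.F_lim ha).sub (h.F_lim ha)
    rw [hG]
    simpa using this
  have h1 : G 1 < 0 := by
    have := hanti (Set.mem_Ici.2 le_rfl) (Set.mem_Ici.2 zero_le_one) zero_lt_one
    linarith
  have : (0:ℝ) ≤ G 1 := by
    apply le_of_tendsto hlim
    filter_upwards [eventually_ge_atTop 1] with r hr
    exact hanti.antitoneOn (Set.mem_Ici.2 zero_le_one) (Set.mem_Ici.2 (zero_le_one.trans hr)) hr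
  linarith

/-- Any `1`-kink `φ₁` is strictly increasing (`φ₁'(r) > 0` for all `r`), with
`φ₁(0) = π/2` and `φ₁'(0) > √2`. -/
theorem one_kink_monotone (a : ℝ) (ha : 0 < a) (φ₁ : ℝ → ℝ)
    (hφ : ContDiff ℝ 2 φ₁)
    (hφeq : ∀ r : ℝ, deriv (deriv φ₁) r + (2 * r / (r ^ 2 + a ^ 2)) * deriv φ₁ r
        = Real.sin (2 * φ₁ r))
    (hbot : Tendsto φ₁ atBot (nhds 0))
    (htop : Tendsto φ₁ atTop (nhds Real.pi)) :
    (∀ r : ℝ, 0 < deriv φ₁ r) ∧ φ₁ 0 = Real.pi / 2 ∧ Real.sqrt 2 < deriv φ₁ 0 := by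
  have hd : Differentiable ℝ φ₁ := hφ.differentiable (by norm_num)
  have hd2 : Differentiable ℝ (deriv φ₁) := by
    have : ContDiff ℝ 1 (deriv φ₁) := by
      have h2 : ContDiff ℝ (1 + 1) φ₁ := by
        convert hφ using 1
        norm_num
      exact (contDiff_succ_iff_deriv.1 h2).2.2
    exact this.differentiable (by norm_num)
  have h : IsK a φ₁ (deriv φ₁) :=
    { d1 := fun r => (hd r).hasDerivAt
      d2 := fun r => by
        have := (hd2 r).hasDerivAt
        refine HasDerivAt.congr_deriv this ?_
        linarith [hφeq r]
      bot := hbot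
      top := htop }
  have h0 : φ₁ 0 = Real.pi / 2 := by
    have h1 := h.half_le ha
    have h2 := h.refl.half_le ha
    simp only [neg_zero] at h2
    linarith
  refine ⟨h.p_pos ha, h0, ?_⟩
  have hE := h.E_pos ha 0
  rw [h0, Real.sin_pi_div_two] at hE
  rw [Real.sqrt_lt' (h.p_pos ha 0)]
  linarith
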